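/- For every integer n ≥ 2 and every integer d ≥ 0 there are only finitely many isomorphism classes of d-maximal subsets of [n]^∞; that is, there exist finitely many d-maximal sets T_1, …, T_N ⊆ [n]^∞ such that every d-maximal set S ⊆ [n]^∞ equals σ(T_j) for some j and some isomorphism σ. -/

import Mathlib

/-- Hamming distance between infinite words over `Fin n`, as an extended natural number. -/
noncomputable def hDist (n : ℕ) (a b : ℕ → Fin n) : ℕ∞ := {i | a i ≠ b i}.encard

/-- The `r`-ball around `a`. -/
def hBall (n : ℕ) (a : ℕ → Fin n) (r : ℕ) : Set (ℕ → Fin n) := {x | hDist n x a ≤ (r : ℕ∞)}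

/-- `S` is `d`-maximal: it has diameter `d` and any point within distance `d`
of all of `S` already belongs to `S`. -/
def IsDMaximal (n d : ℕ) (S : Set (ℕ → Fin n)) : Prop :=
  (∀ a ∈ S, ∀ b ∈ S, hDist n a b ≤ (d : ℕ∞)) ∧
  (∃ a ∈ S, ∃ b ∈ S, hDist n a b = (d : ℕ∞)) ∧
  (∀ x : ℕ → Fin n, (∀ s ∈ S, hDist n x s ≤ (d : ℕ∞)) → x ∈ S)

/-- `S` contains an `r`-ball. -/
def ContainsBall (n : ℕ) (S : Set (ℕ → Fin n)) (r : ℕ) : Prop :=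
  ∃ a, hBall n a r ⊆ S

/-- `σ` is an isomorphism of `[n]^∞`: it permutes coordinates and applies a
permutation of the alphabet in each position. -/
def IsIso (n : ℕ) (σ : (ℕ → Fin n) → (ℕ → Fin n)) : Prop :=
  ∃ (π : ℕ → Equiv.Perm (Fin n)) (τ : Equiv.Perm ℕ),
    ∀ (a : ℕ → Fin n) (i : ℕ), σ a i = π i (a (τ i))

/-! Call the ball of radius `r` around `u` an inner ball of `S` if every point of `S` lies within
`d - r` of `u`. A `d`-maximal set is the union of its maximal inner balls, so the point is to
show that their centres differ from a fixed `b ∈ S` only on boundedly many coordinates.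

By a sunflower-type argument, a large set `U` of words near `b` has a hub: a word `c` lying on a
geodesic from every point of `S` to some other word of `U`. If `U` consisted of centres of maximal
inner balls, one of these balls would be strictly contained in an inner ball around `c`. Hence
the number of centres is bounded in terms of `n` and `d`, and so is the number of coordinates they
involve. An isomorphism moves these coordinates to an initial segment and `b` to a fixed
word, which leaves only finitely many possible unions of balls.
-/

theorem encard_biUnion_le_mul {ι α : Type*} {s : Set ι} {f : ι → Set α} {m : ℕ∞}
    (hf : ∀ i ∈ s, (f i).encard ≤ m) : (⋃ i ∈ s, f i).encard ≤ s.encard * m := by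
  rcases s.finite_or_infinite with hs | hs
  · lift s to Finset ι using hs
    rw [Set.encard_coe_eq_coe_finsetCard, ← nsmul_eq_mul]
    exact (s.set_encard_biUnion_le f).trans (s.sum_le_card_nsmul _ _ hf)
  · rcases eq_or_ne m 0 with rfl | hm
    · simpa using hf
    · simp [hs.encard_eq, ENat.top_mul hm]

theorem exists_perm_mapsTo_of_encard_le {ι : Type*} {s t : Set ι} (hs : s.Finite)
    (h : s.encard ≤ t.encard) : ∃ τ : Equiv.Perm ι, Set.MapsTo τ s t := by
  rcases isEmpty_or_nonempty ι with _ | _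
  · exact ⟨Equiv.refl ι, fun i => isEmptyElim i⟩
  obtain ⟨f, hmaps, hinj⟩ := hs.exists_injOn_of_encard_le h
  let g : s ↪ ι := ⟨s.domRestrict f, hinj.injective⟩
  obtain ⟨τ, hτ⟩ : ∃ τ : ι ≃ ι, ∀ i : s, τ i = g i := by
    rcases finite_or_infinite ι with _ | _
    · exact Cardinal.extend_function_finite g ⟨Equiv.refl ι⟩
    · exact Cardinal.extend_function_of_lt g
        (hs.lt_aleph0.trans_le (Cardinal.aleph0_le_mk ι)) ⟨Equiv.refl ι⟩
  refine ⟨τ, fun i hi => ?_⟩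
  rw [hτ ⟨i, hi⟩]
  exact hmaps hi

theorem finite_setOf_eqOn_compl {ι α : Type*} [Finite α] {s : Set ι} (hs : s.Finite)
    (z : ι → α) : {v : ι → α | Set.EqOn v z sᶜ}.Finite := by
  have : Finite s := hs
  refine Set.Finite.of_injOn (f := s.domRestrict) (Set.mapsTo_univ _ _) ?_ Set.finite_univ
  intro v hv w hw hvw
  rw [← Set.eqOn_univ, ← Set.union_compl_self s]
  exact (Set.domRestrict_eq_domRestrict_iff.mp hvw).union (hv.trans hw.symm)

section HammingDistance

variable {n : ℕ}

theorem hDist_self (a : ℕ → Fin n) : hDist n a a = 0 := by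
  simp [hDist]

theorem hDist_eq_zero {a b : ℕ → Fin n} : hDist n a b = 0 ↔ a = b := by
  simp [hDist, Set.eq_empty_iff_forall_notMem, funext_iff]

theorem hDist_comm (a b : ℕ → Fin n) : hDist n a b = hDist n b a := by
  simp only [hDist, ne_comm]

theorem hDist_triangle (a b c : ℕ → Fin n) : hDist n a c ≤ hDist n a b + hDist n b c := by
  refine (Set.encard_le_encard fun i hi => ?_).trans (Set.encard_union_le _ _)
  exact (ne_or_eq (a i) (b i)).imp_right fun hab hbc => hi (hab.trans hbc)

theorem hDist_eq_add_of_forall_eq_or_eq {a b c : ℕ → Fin n} (h : ∀ i, b i = a i ∨ b i = c i) :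
    hDist n a c = hDist n a b + hDist n b c := by
  have hdisj : Disjoint {i | a i ≠ b i} {i | b i ≠ c i} :=
    Set.disjoint_left.mpr fun i hab hbc => (h i).elim (hab ∘ Eq.symm) hbc
  rw [hDist, hDist, hDist, ← Set.encard_union_eq hdisj]
  congr 1
  ext i
  simp only [Set.mem_ofPred_eq, Set.mem_union]
  grind

theorem hDist_update_self {b : ℕ → Fin n} {i : ℕ} {v : Fin n} (hv : v ≠ b i) :
    hDist n (Function.update b i v) b = 1 := by
  rw [hDist, Set.encard_eq_one]
  refine ⟨i, Set.ext fun j => ?_⟩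
  rcases eq_or_ne j i with rfl | hj <;> simp [*]

theorem hBall_subset_hBall_update {b : ℕ → Fin n} {i : ℕ} {v : Fin n} (hv : v ≠ b i) (r : ℕ) :
    hBall n b r ⊆ hBall n (Function.update b i v) (r + 1) := by
  intro x (hx : hDist n x b ≤ r)
  calc hDist n x (Function.update b i v)
      ≤ hDist n x b + hDist n b (Function.update b i v) := hDist_triangle _ _ _
    _ ≤ ((r + 1 : ℕ) : ℕ∞) := by
        rw [hDist_comm b, hDist_update_self hv, Nat.cast_add, Nat.cast_one]
        gcongr

theorem mem_hBall_update_of_mem_hBall_succ {b u : ℕ → Fin n} {i k : ℕ} (hi : u i ≠ b i)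
    (hu : u ∈ hBall n b (k + 1)) : u ∈ hBall n (Function.update b i (u i)) k := by
  have hadd : hDist n u b = hDist n u (Function.update b i (u i)) + 1 := by
    rw [← hDist_update_self hi]
    refine hDist_eq_add_of_forall_eq_or_eq fun j => ?_
    rcases eq_or_ne j i with rfl | hj <;> simp [*]
  have hle : hDist n u b ≤ ((k + 1 : ℕ) : ℕ∞) := hu
  rw [hadd, Nat.cast_add, Nat.cast_one] at hle
  exact (ENat.add_le_add_iff_right ENat.one_ne_top).mp hle

end HammingDistance

section Hub

variable {n : ℕ}

/-- `c` is a hub from `V` to `U` if it lies on a geodesic from every point of `V` to some point of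
`U` other than `c`. This plays the role of the kernel of a sunflower with petals in `U`. -/
def IsHub (n : ℕ) (V U : Set (ℕ → Fin n)) (c : ℕ → Fin n) : Prop :=
  ∀ x ∈ V, ∃ u ∈ U, u ≠ c ∧ hDist n x u = hDist n x c + hDist n c u

theorem IsHub.mono {V V' U U' : Set (ℕ → Fin n)} {c : ℕ → Fin n} (h : IsHub n V U c)
    (hV : V' ⊆ V) (hU : U ⊆ U') : IsHub n V' U' c := fun x hx =>
  let ⟨u, hu, huc⟩ := h x (hV hx)
  ⟨u, hU hu, huc⟩

theorem encard_le_of_forall_exists_ne {b x : ℕ → Fin n} {D M : ℕ} {U : Set (ℕ → Fin n)}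
    (hx : x ∈ hBall n b D) (hU : ∀ u ∈ U, u ≠ b → ∃ i, x i ≠ b i ∧ u i ≠ b i)
    (hM : ∀ i v, v ≠ b i → {u ∈ U | u i = v}.encard ≤ M) :
    U.encard ≤ (1 + D * (n * M) : ℕ) := by
  have hcover : U ⊆ {b} ∪ ⋃ i ∈ {i | x i ≠ b i}, ⋃ v ∈ {v | v ≠ b i}, {u ∈ U | u i = v} := by
    intro u hu
    rcases eq_or_ne u b with rfl | hub
    · exact Or.inl rfl
    · obtain ⟨i, hxi, hui⟩ := hU u hu hub
      exact Or.inr (Set.mem_biUnion hxi (Set.mem_biUnion hui ⟨hu, rfl⟩))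
  have hletter (i : ℕ) : (⋃ v ∈ {v | v ≠ b i}, {u ∈ U | u i = v}).encard ≤ n * M := by
    refine (encard_biUnion_le_mul (hM i)).trans ?_
    gcongr
    exact (Set.encard_le_encard (Set.subset_univ _)).trans (by simp)
  calc U.encard
      ≤ ({b} : Set (ℕ → Fin n)).encard + hDist n x b * (n * M) :=
        (Set.encard_le_encard hcover).trans <| (Set.encard_union_le _ _).trans <|
          add_le_add_right (encard_biUnion_le_mul fun i _ => hletter i) _
    _ ≤ (1 + D * (n * M) : ℕ) := by
        rw [Set.encard_singleton]
        push_cast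
        gcongr
        exact hx

theorem exists_encard_le_or_isHub (n k D : ℕ) : ∃ M : ℕ, ∀ b : ℕ → Fin n, ∀ U ⊆ hBall n b k,
    U.encard ≤ M ∨ ∃ c, IsHub n (hBall n b D) U c := by
  induction k generalizing D with
  | zero =>
    refine ⟨1, fun b U hU => Or.inl ?_⟩
    have hsub : U ⊆ {b} := fun u hu => hDist_eq_zero.mp (by simpa [hBall] using hU hu)
    simpa using Set.encard_le_encard hsub
  | succ k ih =>
    obtain ⟨M, hM⟩ := ih (D + 1)
    refine ⟨1 + D * (n * M), fun b U hU => or_iff_not_imp_right.mpr fun hnohub => ?_⟩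
    obtain ⟨x, hx, hxU⟩ : ∃ x ∈ hBall n b D, ∀ u ∈ U, u ≠ b → ∃ i, x i ≠ b i ∧ u i ≠ b i := by
      by_contra! hfar
      refine hnohub ⟨b, fun x hx => ?_⟩
      obtain ⟨u, hu, hub, hxu⟩ := hfar x hx
      refine ⟨u, hu, hub, hDist_eq_add_of_forall_eq_or_eq fun i => ?_⟩
      exact or_iff_not_imp_left.mpr fun hi => (hxu i (Ne.symm hi)).symm
    refine encard_le_of_forall_exists_ne hx hxU fun i v hv => ?_
    have hfiber : {u ∈ U | u i = v} ⊆ hBall n (Function.update b i v) k := by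
      rintro u ⟨hu, rfl⟩
      exact mem_hBall_update_of_mem_hBall_succ hv (hU hu)
    refine (hM _ _ hfiber).resolve_right fun ⟨c, hc⟩ => hnohub ⟨c, ?_⟩
    exact hc.mono (hBall_subset_hBall_update hv D) (Set.sep_subset U _)

end Hub

section InnerBall

variable {n d : ℕ} {S : Set (ℕ → Fin n)} {u : ℕ → Fin n} {r : ℕ}

/-- The ball of radius `r` around `u` is an inner ball of `S` if every point of `S` is within
`d - r` of `u`; the inequality is written additively to avoid truncated subtraction. If `S` is
`d`-maximal, then it contains all its inner balls. -/
def IsInnerBall (n d : ℕ) (S : Set (ℕ → Fin n)) (u : ℕ → Fin n) (r : ℕ) : Prop :=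
  ∀ x ∈ S, hDist n x u + r ≤ (d : ℕ∞)

/-- A maximal inner ball: one that does not lie in an inner ball with a different centre. Inclusion
of the ball `(u, r)` in the ball `(c, t)` is expressed as `hDist n u c + r ≤ t`. -/
def IsMaxInnerBall (n d : ℕ) (S : Set (ℕ → Fin n)) (u : ℕ → Fin n) (r : ℕ) : Prop :=
  IsInnerBall n d S u r ∧
    ∀ c t, IsInnerBall n d S c t → hDist n u c + r ≤ (t : ℕ∞) → c = u

/-- The centres of the maximal inner balls of `S`. -/
def maxInnerCenters (n d : ℕ) (S : Set (ℕ → Fin n)) : Set (ℕ → Fin n) :=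
  {u | ∃ r, IsMaxInnerBall n d S u r}

theorem IsInnerBall.radius_le (h : IsInnerBall n d S u r) (hS : S.Nonempty) : r ≤ d := by
  obtain ⟨x, hx⟩ := hS
  exact_mod_cast le_add_self.trans (h x hx)

theorem IsInnerBall.hBall_subset (h : IsInnerBall n d S u r) (hS : IsDMaximal n d S) :
    hBall n u r ⊆ S := by
  intro x (hx : hDist n x u ≤ r)
  refine hS.2.2 x fun s hs => ?_
  calc hDist n x s ≤ hDist n x u + hDist n u s := hDist_triangle _ _ _
    _ ≤ hDist n s u + r := by rw [hDist_comm u, add_comm]; gcongr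
    _ ≤ d := h s hs

theorem IsInnerBall.exists_isMaxInnerBall (h : IsInnerBall n d S u r) (hS : S.Nonempty) :
    ∃ c t, IsMaxInnerBall n d S c t ∧ hDist n u c + r ≤ (t : ℕ∞) := by
  let R : Set ℕ := {t | ∃ c, IsInnerBall n d S c t ∧ hDist n u c + r ≤ (t : ℕ∞)}
  have hbdd : BddAbove R := ⟨d, fun t ⟨_, hc, _⟩ => hc.radius_le hS⟩
  obtain ⟨t, ⟨c, hc, huc⟩, hmax⟩ :=
    hbdd.exists_isGreatest_of_nonempty ⟨r, u, h, by simp [hDist_self]⟩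
  refine ⟨c, t, ⟨hc, fun c' t' hc' hcc' => ?_⟩, huc⟩
  have huc' : hDist n u c' + r ≤ (t' : ℕ∞) :=
    calc hDist n u c' + r ≤ hDist n u c + hDist n c c' + r := by
          gcongr
          exact hDist_triangle _ _ _
      _ = hDist n c c' + (hDist n u c + r) := by ring
      _ ≤ hDist n c c' + t := by gcongr
      _ ≤ t' := hcc'
  have ht' : (t' : ℕ∞) ≤ t := by exact_mod_cast hmax ⟨c', hc', huc'⟩
  have hzero : hDist n c c' = 0 := by
    refine nonpos_iff_eq_zero.mp ((ENat.add_le_add_iff_right (ENat.natCast_ne_top t)).mp ?_)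
    simpa using hcc'.trans ht'
  exact (hDist_eq_zero.mp hzero).symm

theorem IsDMaximal.eq_biUnion_hBall (hS : IsDMaximal n d S) :
    S = ⋃ q ∈ {q : (ℕ → Fin n) × ℕ | IsMaxInnerBall n d S q.1 q.2}, hBall n q.1 q.2 := by
  refine Set.Subset.antisymm (fun x hx => ?_)
    (Set.iUnion₂_subset fun q hq => hq.1.hBall_subset hS)
  have hball : IsInnerBall n d S x 0 := fun y hy => by simpa using hS.1 y hy x hx
  obtain ⟨c, t, hct, hxc⟩ := hball.exists_isMaxInnerBall ⟨x, hx⟩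
  exact Set.mem_biUnion (x := (c, t)) hct (le_self_add.trans hxc)

theorem not_isHub_maxInnerCenters (hS : S.Nonempty) (c : ℕ → Fin n) :
    ¬ IsHub n S (maxInnerCenters n d S) c := by
  intro hub
  obtain ⟨y, hy⟩ := hS
  let P : (ℕ → Fin n) × ℕ → Prop := fun q => IsMaxInnerBall n d S q.1 q.2 ∧ q.1 ≠ c
  let cost : (ℕ → Fin n) × ℕ → ℕ∞ := fun q => hDist n c q.1 + q.2
  have hcost : ∀ x ∈ S, ∃ q, P q ∧ hDist n x c + cost q ≤ d := by
    intro x hx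
    obtain ⟨u, ⟨r, hur⟩, huc, hgeo⟩ := hub x hx
    refine ⟨(u, r), ⟨hur, huc⟩, ?_⟩
    rw [← add_assoc, ← hgeo]
    exact hur.1 x hx
  -- The ball around `c` of radius `min cost` is inner and contains the ball attaining the minimum.
  obtain ⟨⟨u, r⟩, ⟨hmax, huc⟩, hmin⟩ :=
    exists_minimalFor_of_wellFoundedLT P cost (let ⟨q, hq, _⟩ := hcost y hy; ⟨q, hq⟩)
  have hinner : ∀ x ∈ S, hDist n x c + cost (u, r) ≤ d := by
    intro x hx
    obtain ⟨q, hq, hle⟩ := hcost x hx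
    refine le_trans ?_ hle
    gcongr
    exact (le_total (cost (u, r)) (cost q)).elim id (hmin hq)
  obtain ⟨t, ht⟩ : ∃ t : ℕ, (t : ℕ∞) = cost (u, r) :=
    ENat.ne_top_iff_exists.mp
      (ne_top_of_le_ne_top (ENat.natCast_ne_top d) (le_add_self.trans (hinner y hy)))
  refine huc (hmax.2 c t (fun x hx => ?_) ?_).symm
  · rw [ht]
    exact hinner x hx
  · rw [ht, hDist_comm u]

theorem maxInnerCenters_subset_hBall {b : ℕ → Fin n} (hb : b ∈ S) :
    maxInnerCenters n d S ⊆ hBall n b d := by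
  rintro u ⟨r, hu⟩
  rw [hBall, Set.mem_ofPred_eq, hDist_comm]
  exact le_self_add.trans (hu.1 b hb)

theorem exists_encard_maxInnerCenters_le (n d : ℕ) : ∃ M : ℕ, ∀ S : Set (ℕ → Fin n), ∀ b ∈ S,
    S ⊆ hBall n b d → (maxInnerCenters n d S).encard ≤ M := by
  obtain ⟨M, hM⟩ := exists_encard_le_or_isHub n d d
  refine ⟨M, fun S b hb hS => (hM b _ (maxInnerCenters_subset_hBall hb)).resolve_right ?_⟩
  rintro ⟨c, hc⟩
  exact not_isHub_maxInnerCenters ⟨b, hb⟩ c (hc.mono hS Set.Subset.rfl)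

theorem exists_encard_support_maxInnerCenters_le (n d : ℕ) : ∃ L : ℕ,
    ∀ S : Set (ℕ → Fin n), ∀ b ∈ S, S ⊆ hBall n b d →
      (⋃ u ∈ maxInnerCenters n d S, {i | u i ≠ b i}).encard ≤ L := by
  obtain ⟨M, hM⟩ := exists_encard_maxInnerCenters_le n d
  refine ⟨M * d, fun S b hb hS => ?_⟩
  refine (encard_biUnion_le_mul fun u hu => maxInnerCenters_subset_hBall hb hu).trans ?_
  rw [Nat.cast_mul]
  gcongr
  exact hM S b hb hS

end InnerBall

namespace IsIso

variable {n d : ℕ} {σ : (ℕ → Fin n) → (ℕ → Fin n)}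

theorem surjective (hσ : IsIso n σ) : Function.Surjective σ := by
  obtain ⟨π, τ, h⟩ := hσ
  refine fun u => ⟨fun j => (π (τ.symm j)).symm (u (τ.symm j)), funext fun i => ?_⟩
  simp [h]

theorem hDist_map (hσ : IsIso n σ) (a b : ℕ → Fin n) : hDist n (σ a) (σ b) = hDist n a b := by
  obtain ⟨π, τ, h⟩ := hσ
  rw [hDist, hDist, ← Set.encard_preimage_of_bijective τ.bijective {i | a i ≠ b i}]
  simp [h]

theorem preimage_hBall (hσ : IsIso n σ) (u : ℕ → Fin n) (r : ℕ) :
    σ ⁻¹' hBall n (σ u) r = hBall n u r := by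
  ext x
  simp [hBall, hσ.hDist_map]

theorem isDMaximal_preimage (hσ : IsIso n σ) {S : Set (ℕ → Fin n)} (hS : IsDMaximal n d S) :
    IsDMaximal n d (σ ⁻¹' S) := by
  obtain ⟨hdiam, ⟨a, ha, b, hb, hab⟩, hmax⟩ := hS
  obtain ⟨a, rfl⟩ := hσ.surjective a
  obtain ⟨b, rfl⟩ := hσ.surjective b
  refine ⟨fun x hx y hy => ?_, ⟨a, ha, b, hb, by rwa [hσ.hDist_map] at hab⟩, fun x hx => ?_⟩
  · rw [← hσ.hDist_map]
    exact hdiam _ hx _ hy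
  · refine hmax _ (hσ.surjective.forall.mpr fun s hs => ?_)
    rw [hσ.hDist_map]
    exact hx s hs

theorem preimage_biUnion_hBall (hσ : IsIso n σ) (P : Set ((ℕ → Fin n) × ℕ)) :
    σ ⁻¹' (⋃ q ∈ P, hBall n q.1 q.2) =
      ⋃ q ∈ Prod.map σ id ⁻¹' P, hBall n q.1 q.2 := by
  have hP := Set.image_preimage_eq P (hσ.surjective.prodMap Function.surjective_id)
  conv_lhs => rw [← hP, Set.biUnion_image]
  simp only [Set.preimage_iUnion₂, Prod.map_fst, Prod.map_snd, id_eq, hσ.preimage_hBall]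

end IsIso

theorem exists_isIso_eqOn {n L : ℕ} {s : Set ℕ} (hs : s.encard ≤ L) (b z : ℕ → Fin n) :
    ∃ σ, IsIso n σ ∧ ∀ v, Set.EqOn (σ v) b sᶜ → Set.EqOn v z (Set.Iio L)ᶜ := by
  obtain ⟨τ, hτ⟩ := exists_perm_mapsTo_of_encard_le (t := Set.Iio L)
    (Set.finite_of_encard_le_coe hs) (hs.trans_eq (by simp [← Finset.coe_Iio]))
  refine ⟨fun a i => Equiv.swap (b i) (z (τ i)) (a (τ i)), ⟨_, τ, fun _ _ => rfl⟩, ?_⟩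
  intro v hv j hj
  obtain ⟨i, rfl⟩ := τ.surjective j
  simpa [Equiv.swap_apply_eq_iff] using hv fun hi => hj (hτ hi)

theorem exists_finite_forall_preimage_mem (n d : ℕ) (z : ℕ → Fin n) :
    ∃ 𝒯 : Set (Set (ℕ → Fin n)), 𝒯.Finite ∧
      ∀ S, IsDMaximal n d S → ∃ σ, IsIso n σ ∧ σ ⁻¹' S ∈ 𝒯 := by
  obtain ⟨L, hL⟩ := exists_encard_support_maxInnerCenters_le n d
  let balls : Set ((ℕ → Fin n) × ℕ) := {v | Set.EqOn v z (Set.Iio L)ᶜ} ×ˢ Set.Iic d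
  have hballs : balls.Finite :=
    (finite_setOf_eqOn_compl (Set.finite_Iio L) z).prod (Set.finite_Iic d)
  refine ⟨(fun P => ⋃ q ∈ P, hBall n q.1 q.2) '' 𝒫 balls, hballs.finite_subsets.image _, ?_⟩
  intro S hS
  obtain ⟨b, hb, -⟩ := hS.2.1
  obtain ⟨σ, hσ, hnorm⟩ := exists_isIso_eqOn (hL S b hb fun x hx => hS.1 x hx b hb) b z
  let P : Set ((ℕ → Fin n) × ℕ) := {q | IsMaxInnerBall n d S q.1 q.2}
  refine ⟨σ, hσ, Prod.map σ id ⁻¹' P, ?_, ?_⟩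
  · rintro ⟨v, r⟩ (hvr : IsMaxInnerBall n d S (σ v) r)
    refine ⟨hnorm v fun i hi => ?_, hvr.1.radius_le ⟨b, hb⟩⟩
    by_contra hne
    exact hi (Set.mem_biUnion ⟨r, hvr⟩ hne)
  · exact (hσ.preimage_biUnion_hBall P).symm.trans (congrArg _ hS.eq_biUnion_hBall.symm)

theorem stmt4 (n d : ℕ) (hn : 2 ≤ n) :
    ∃ (N : ℕ) (T : Fin N → Set (ℕ → Fin n)),
      (∀ j, IsDMaximal n d (T j)) ∧
      ∀ S : Set (ℕ → Fin n), IsDMaximal n d S →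
        ∃ (j : Fin N) (σ : (ℕ → Fin n) → (ℕ → Fin n)), IsIso n σ ∧ S = σ '' T j := by
  obtain ⟨𝒯, hfin, h𝒯⟩ := exists_finite_forall_preimage_mem n d fun _ => ⟨0, by omega⟩
  obtain ⟨N, T, -, hT⟩ := (hfin.inter_of_left {T | IsDMaximal n d T}).fin_param
  refine ⟨N, T, fun j => (hT ▸ Set.mem_range_self j : T j ∈ 𝒯 ∩ _).2, fun S hS => ?_⟩
  obtain ⟨σ, hσ, hmem⟩ := h𝒯 S hS
  obtain ⟨j, hj⟩ : σ ⁻¹' S ∈ Set.range T := hT ▸ ⟨hmem, hσ.isDMaximal_preimage hS⟩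
  exact ⟨j, σ, hσ, by rw [hj, Set.image_preimage_eq S hσ.surjective]⟩
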